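/- arXiv:2406.18835 — 2 statements merged into one kernel-verified Lean document; each statement's English description precedes it below -/
import Mathlib

section
/- Let G be a finite simple graph on vertex set V equipped with a linear order that is a perfect elimination ordering of G, let S ⊆ V, and let k be a positive integer. Then the induced subgraph G[S] is k-colorable if and only if for every v ∈ S, |N^left(v) ∩ S| ≤ k − 1. In particular, if G[S] is k-colorable then the {0,1} indicator vector x of S satisfies the linear constraints x_v + Σ_{u ∈ N^left(v)} x_u ≤ k for all v ∈ V. -/
/-!
A set of vertices colorable with `k` colors meets every clique in at most `k` vertices. In a
perfect elimination ordering each vertex forms a clique with its left neighbors, which yields the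
linear constraints and the bound on the left neighborhoods. Conversely, coloring the vertices
greedily from left to right never needs more than `k` colors if each vertex has fewer than `k`
left neighbors.
-/

section Coloring

variable {V : Type*} {G : SimpleGraph V} {s : Set V} {k : ℕ}

theorem exists_forall_mem_ne_of_encard_lt {α β : Type*} {t : Set α}
    (ht : t.encard < ENat.card β) (f : α → β) : ∃ b, ∀ a ∈ t, f a ≠ b := by
  by_contra! hf
  have image_eq_univ : f '' t = Set.univ := Set.eq_univ_of_forall hf
  have card_le : ENat.card β ≤ t.encard := by
    simpa only [image_eq_univ, Set.encard_univ] using Set.encard_image_le f t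
  exact ht.not_ge card_le

theorem colorable_induce_insert {a : V} (hs : (G.induce s).Colorable k)
    (ha : (G.neighborSet a ∩ s).encard < k) : (G.induce (insert a s)).Colorable k := by
  classical
  obtain ⟨C⟩ := hs
  obtain ⟨c, hc⟩ : ∃ c, ∀ u : s, G.Adj a u → C u ≠ c := by
    have encard_lt : (Subtype.val ⁻¹' (G.neighborSet a ∩ s) : Set s).encard < ENat.card (Fin k) :=
      (Set.encard_preimage_val_le_encard_right _ _).trans_lt (by simpa using ha)
    obtain ⟨c, hc⟩ := exists_forall_mem_ne_of_encard_lt encard_lt C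
    exact ⟨c, fun u hu => hc u ⟨hu, u.2⟩⟩
  let extended (u : ↥(insert a s)) : Fin k :=
    if h : u.1 = a then c else C ⟨u, u.2.resolve_left h⟩
  refine ⟨SimpleGraph.Coloring.mk extended ?_⟩
  rintro ⟨u, hu⟩ ⟨w, hw⟩ (huw : G.Adj u w)
  by_cases hua : u = a <;> by_cases hwa : w = a <;>
    simp only [extended, hua, hwa, dite_true, dite_false]
  · exact (huw.ne (hua.trans hwa.symm)).elim
  · exact (hc ⟨w, hw.resolve_left hwa⟩ (hua ▸ huw)).symm
  · exact hc ⟨u, hu.resolve_left hua⟩ (hwa ▸ huw.symm)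
  · exact C.valid huw

theorem card_le_of_colorable_induce {K : Finset V} (hK : G.IsClique (K : Set V))
    (hKs : (K : Set V) ⊆ s) (hs : (G.induce s).Colorable k) : K.card ≤ k := by
  simpa using hs.card_le_of_pairwise_adj (Set.inclusion hKs)
    (fun u v huv => hK u.2 v.2 (Subtype.coe_ne_coe.2 huv))

theorem sum_indicator_le_of_colorable_induce [DecidablePred (· ∈ s)] {K : Finset V}
    (hK : G.IsClique (K : Set V)) (hs : (G.induce s).Colorable k) :
    ∑ u ∈ K, (if u ∈ s then 1 else 0) ≤ k := by
  rw [← Finset.card_filter]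
  refine card_le_of_colorable_induce (hK.subset ?_) (fun u hu => ?_) hs
  · exact Finset.coe_subset.2 (Finset.filter_subset _ K)
  · exact (Finset.mem_filter.1 hu).2

end Coloring

section LeftNeighbors

/-- The left neighborhood `N^left(v)`: the neighbors of `v` that precede it. -/
def leftNeighborSet {V : Type*} [LT V] (G : SimpleGraph V) (v : V) : Set V :=
  {u | G.Adj u v ∧ u < v}

/-- The order on the vertices is a perfect elimination ordering of `G`, in the convention where
the preceding (not the following) neighbors of each vertex form a clique. -/
def IsPerfectElimination {V : Type*} [LT V] (G : SimpleGraph V) : Prop :=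
  ∀ v, G.IsClique (leftNeighborSet G v)

variable {V : Type*} [LinearOrder V] {G : SimpleGraph V} [DecidableRel G.Adj] {k : ℕ}

instance decidableMemLeftNeighborSet (v : V) : DecidablePred (· ∈ leftNeighborSet G v) :=
  fun u => inferInstanceAs (Decidable (G.Adj u v ∧ u < v))

theorem notMem_filter_leftNeighborSet (T : Finset V) (v : V) :
    v ∉ T.filter (· ∈ leftNeighborSet G v) :=
  fun hv => (Finset.mem_filter.1 hv).2.2.false

theorem IsPerfectElimination.isClique_insert_filter (hG : IsPerfectElimination G)
    (T : Finset V) (v : V) :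
    G.IsClique (insert v (T.filter (· ∈ leftNeighborSet G v)) : Finset V) := by
  rw [Finset.coe_insert]
  refine ((hG v).subset fun u hu => ?_).insert fun u hu _ => ?_
  · exact (Finset.mem_filter.1 hu).2
  · exact (Finset.mem_filter.1 hu).2.1.symm

theorem colorable_induce_of_card_leftNeighbors_lt {S : Finset V}
    (hS : ∀ v ∈ S, (S.filter (· ∈ leftNeighborSet G v)).card < k) :
    (G.induce (S : Set V)).Colorable k := by
  induction S using Finset.induction_on_max with
  | empty => exact @SimpleGraph.Colorable.of_isEmpty _ _ (by simp) k
  | insert a s s_lt_a ih =>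
    have colorable_s : (G.induce (s : Set V)).Colorable k := ih fun v hv =>
      (Finset.card_le_card (Finset.filter_subset_filter _ (Finset.subset_insert a s))).trans_lt
        (hS v (Finset.mem_insert_of_mem hv))
    have neighbors_subset : G.neighborSet a ∩ s ⊆
        ((insert a s).filter (· ∈ leftNeighborSet G a) : Finset V) := fun u ⟨hua, hus⟩ =>
      Finset.mem_filter.2 ⟨Finset.mem_insert_of_mem hus, hua.symm, s_lt_a u hus⟩
    rw [Finset.coe_insert]
    refine colorable_induce_insert colorable_s ((Set.encard_le_encard neighbors_subset).trans_lt ?_)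
    rw [Set.encard_coe_eq_coe_finsetCard]
    exact_mod_cast hS a (Finset.mem_insert_self a s)

theorem IsPerfectElimination.card_leftNeighbors_lt (hG : IsPerfectElimination G) {S : Finset V}
    (hS : (G.induce (S : Set V)).Colorable k) {v : V} (hv : v ∈ S) :
    (S.filter (· ∈ leftNeighborSet G v)).card < k := by
  rw [Nat.lt_iff_add_one_le, ← Finset.card_insert_of_notMem (notMem_filter_leftNeighborSet S v)]
  refine card_le_of_colorable_induce (hG.isClique_insert_filter S v) ?_ hS
  exact Finset.coe_subset.2 (Finset.insert_subset hv (Finset.filter_subset _ S))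

theorem IsPerfectElimination.indicator_add_sum_le (hG : IsPerfectElimination G) {s : Set V}
    [DecidablePred (· ∈ s)] (hs : (G.induce s).Colorable k) (T : Finset V) (v : V) :
    (if v ∈ s then 1 else 0)
      + ∑ u ∈ T.filter (· ∈ leftNeighborSet G v), (if u ∈ s then 1 else 0) ≤ k := by
  rw [← Finset.sum_insert (f := fun u => if u ∈ s then 1 else 0)
    (notMem_filter_leftNeighborSet T v)]
  exact sum_indicator_le_of_colorable_induce (hG.isClique_insert_filter T v) hs

end LeftNeighbors

theorem stmt2_general {V : Type*} [LinearOrder V] {G : SimpleGraph V} [DecidableRel G.Adj]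
    (hG : IsPerfectElimination G) (S : Finset V) (k : ℕ) :
    ((G.induce (S : Set V)).Colorable k ↔
      ∀ v ∈ S, (S.filter (· ∈ leftNeighborSet G v)).card < k)
    ∧ ((G.induce (S : Set V)).Colorable k →
      ∀ (T : Finset V) (v : V), (if v ∈ S then 1 else 0)
        + ∑ u ∈ T.filter (· ∈ leftNeighborSet G v), (if u ∈ S then 1 else 0) ≤ k) :=
  ⟨⟨fun hS _ hv => hG.card_leftNeighbors_lt hS hv, colorable_induce_of_card_leftNeighbors_lt⟩,
    hG.indicator_add_sum_le⟩

/-- For a perfect elimination ordering of a chordal graph `G`, a subset `S` and a positive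
integer `k`: `G[S]` is `k`-colorable iff every vertex `v ∈ S` has at most `k - 1` left
neighbors inside `S`; in particular, the 0/1 indicator vector of `S` satisfies the LP
constraints `x_v + ∑_{u ∈ N^left(v)} x_u ≤ k` for all `v`. -/
theorem stmt2 {V : Type*} [Fintype V] [LinearOrder V]
    (G : SimpleGraph V) [DecidableRel G.Adj]
    (hpeo : ∀ v : V, G.IsClique {u | G.Adj u v ∧ u < v})
    (S : Finset V) (k : ℕ) (hk : 0 < k) :
    ((G.induce (S : Set V)).Colorable k ↔
      ∀ v ∈ S, (S.filter (fun u => G.Adj u v ∧ u < v)).card ≤ k - 1)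
    ∧ ((G.induce (S : Set V)).Colorable k →
      ∀ v : V, (if v ∈ S then 1 else 0)
        + ∑ u ∈ Finset.univ.filter (fun u => G.Adj u v ∧ u < v),
            (if u ∈ S then 1 else 0) ≤ k) := by
  simp only [Nat.le_sub_one_iff_lt hk]
  exact (stmt2_general hpeo S k).imp_right fun h hS => h hS Finset.univ
end

section
/- Let F be a finite index set and v ∉ F an additional index. Let (Y_u)_{u∈F∪{v}} be {0,1}-valued random variables on a probability space such that the family (Y_u)_{u∈F} is pairwise independent, Y_v is independent of Σ_{u∈F} Y_u, E[Y_u] = (1−f)·x_u with x_u ∈ [0,1] for all u ∈ F∪{v}, 0 < f ≤ 1, and Σ_{u∈F} x_u ≤ k for a real k > 0. Then Pr[Y_v = 1 and Σ_{u∈F} Y_u ≤ k−1] ≥ (1−f)·x_v·(1 − 1/(f²·k)). -/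
open MeasureTheory ProbabilityTheory

/-!
Since `Y ^ 2 ≤ Y` for `Y` with values in `[0, 1]`, the mean and the variance of the sum over `F`
are both at most `(1 - f) * k`. Where the bound is not trivial we have `f ^ 2 * k > 1`, and then
exceeding `k - 1` means exceeding the mean by at least `f * k - 1 > 0`. Chebyshev's inequality is
too weak when `f ^ 2 * k` is close to `1`, but Cantelli's one-sided inequality gives the tail bound
`1 / (f ^ 2 * k)`, because `(1 - f) * k * (f ^ 2 * k - 1) ≤ (f * k - 1) ^ 2`, which is AM-GM for
`f ^ 3 * k ^ 2`, `k` and `1`. Independence of the event `Y v = 1` then multiplies the probabilities.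
-/

theorem three_mul_mul_mul_le_add_pow_three {a b c : ℝ} (ha : 0 ≤ a) (hb : 0 ≤ b) (hc : 0 ≤ c) :
    3 * (a * b * c) ≤ a ^ 3 + b ^ 3 + c ^ 3 := by
  have hsos : 0 ≤ (a + b + c) * ((a - b) ^ 2 + (b - c) ^ 2 + (c - a) ^ 2) := by positivity
  linear_combination hsos / 2

theorem one_sub_mul_mul_sq_mul_sub_one_le_sq {f k : ℝ} (hf : 0 ≤ f) (hk : 0 ≤ k) :
    (1 - f) * k * (f ^ 2 * k - 1) ≤ (f * k - 1) ^ 2 := by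
  obtain ⟨b, hb, rfl⟩ : ∃ b : ℝ, 0 ≤ b ∧ b ^ 3 = k :=
    ⟨k ^ ((3 : ℕ)⁻¹ : ℝ), by positivity, Real.rpow_inv_natCast_pow hk three_ne_zero⟩
  have hamgm : 3 * (f * b ^ 2 * b * 1) ≤ (f * b ^ 2) ^ 3 + b ^ 3 + 1 ^ 3 :=
    three_mul_mul_mul_le_add_pow_three (by positivity) hb zero_le_one
  linear_combination hamgm

section Probability

variable {Ω : Type*} {mΩ : MeasurableSpace Ω} {P : Measure Ω}

theorem integral_eq_measureReal_preimage_one {X : Ω → ℝ} (hX : AEMeasurable X P)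
    (h01 : ∀ᵐ ω ∂P, X ω = 0 ∨ X ω = 1) : ∫ ω, X ω ∂P = P.real (X ⁻¹' {1}) := by
  have hindicator : X =ᵐ[P] (X ⁻¹' {1}).indicator 1 := by
    filter_upwards [h01] with ω hω
    rcases hω with hω | hω <;> simp [Set.indicator, hω]
  rw [integral_congr_ae hindicator,
    integral_indicator₀ (hX.nullMeasurableSet_preimage (measurableSet_singleton 1))]
  simp

theorem variance_sum_le_sum_variance [IsFiniteMeasure P] {ι : Type*} {F : Finset ι}
    {X : ι → Ω → ℝ} (hX : ∀ u ∈ F, MemLp (X u) 2 P)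
    (hcov : (F : Set ι).Pairwise fun u w => cov[X u, X w; P] ≤ 0) :
    Var[fun ω => ∑ u ∈ F, X u ω; P] ≤ ∑ u ∈ F, Var[X u; P] := by
  classical
  rw [variance_fun_sum' hX]
  refine Finset.sum_le_sum fun u hu => ?_
  have hoff : ∑ w ∈ F.erase u, cov[X u, X w; P] ≤ 0 :=
    Finset.sum_nonpos fun w hw =>
      hcov hu (Finset.mem_of_mem_erase hw) (Finset.ne_of_mem_erase hw).symm
  rw [← Finset.add_sum_erase F _ hu, covariance_self (hX u hu).aemeasurable]
  exact add_le_of_nonpos_right hoff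

variable [IsProbabilityMeasure P]

theorem variance_le_integral_of_mem_Icc_zero_one {X : Ω → ℝ} (hX : AEMeasurable X P)
    (h01 : ∀ᵐ ω ∂P, X ω ∈ Set.Icc 0 1) : Var[X; P] ≤ P[X] :=
  calc Var[X; P] ≤ (1 - P[X]) * (P[X] - 0) := variance_le_sub_mul_sub h01 hX
    _ = P[X] - P[X] ^ 2 := by ring
    _ ≤ P[X] := sub_le_self _ (sq_nonneg _)

theorem integral_sq_const_mul_sub_integral_add_const {X : Ω → ℝ} (hX : MemLp X 2 P) (a b : ℝ) :
    ∫ ω, (a * (X ω - P[X]) + b) ^ 2 ∂P = a ^ 2 * Var[X; P] + b ^ 2 := by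
  have hcenter : MemLp (fun ω => X ω - P[X]) 2 P := hX.sub (memLp_const _)
  have hmean : ∫ ω, (a * (X ω - P[X]) + b) ∂P = b := by
    rw [integral_add ((hcenter.integrable one_le_two).const_mul a) (integrable_const b),
      integral_const_mul, integral_sub (hX.integrable one_le_two) (integrable_const _)]
    simp
  have hvar : Var[fun ω => a * (X ω - P[X]) + b; P] = a ^ 2 * Var[X; P] := by
    rw [variance_add_const (hcenter.const_mul a).aestronglyMeasurable, variance_const_mul,
      variance_sub_const hX.aestronglyMeasurable]
  have hsub := variance_eq_sub ((hcenter.const_mul a).add (memLp_const b))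
  simp only [Pi.add_def, Pi.pow_def] at hsub
  rw [hvar, hmean] at hsub
  linarith

theorem measureReal_integral_add_le_le_variance_div {X : Ω → ℝ} (hX : MemLp X 2 P) {t : ℝ}
    (ht : 0 < t) : P.real {ω | P[X] + t ≤ X ω} ≤ Var[X; P] / (Var[X; P] + t ^ 2) := by
  set V := Var[X; P]
  have hV0 : 0 ≤ V := variance_nonneg X P
  have hpos : 0 < V + t ^ 2 := by positivity
  -- Markov's inequality is sharpest for the square of `X - P[X] + V / t`, here multiplied by `t`.
  have hsubset : {ω | P[X] + t ≤ X ω} ⊆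
      {ω | (V + t ^ 2) ^ 2 ≤ (t * (X ω - P[X]) + V) ^ 2} := by
    intro ω (hω : P[X] + t ≤ X ω)
    refine pow_le_pow_left₀ hpos.le ?_ 2
    linear_combination t * hω
  have hint : Integrable (fun ω => (t * (X ω - P[X]) + V) ^ 2) P :=
    (((hX.sub (memLp_const _)).const_mul t).add (memLp_const V)).integrable_sq
  have hmarkov : (V + t ^ 2) ^ 2 * P.real {ω | P[X] + t ≤ X ω} ≤ (V + t ^ 2) * V :=
    calc (V + t ^ 2) ^ 2 * P.real {ω | P[X] + t ≤ X ω}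
        ≤ (V + t ^ 2) ^ 2 * P.real {ω | (V + t ^ 2) ^ 2 ≤ (t * (X ω - P[X]) + V) ^ 2} :=
          mul_le_mul_of_nonneg_left (measureReal_mono hsubset) (sq_nonneg _)
      _ ≤ ∫ ω, (t * (X ω - P[X]) + V) ^ 2 ∂P :=
          mul_meas_ge_le_integral_of_nonneg (ae_of_all _ fun ω => sq_nonneg _) hint _
      _ = (V + t ^ 2) * V := by rw [integral_sq_const_mul_sub_integral_add_const hX]; ring
  rw [le_div_iff₀' hpos]
  rw [sq, mul_assoc] at hmarkov
  exact le_of_mul_le_mul_left hmarkov hpos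

theorem measureReal_sub_one_lt_le_one_div {S : Ω → ℝ} {f k : ℝ} (hS : MemLp S 2 P)
    (hf : 0 < f) (hk : 0 < k) (hmean : P[S] ≤ (1 - f) * k) (hvar : Var[S; P] ≤ (1 - f) * k) :
    P.real {ω | k - 1 < S ω} ≤ 1 / (f ^ 2 * k) := by
  have hfk : 0 < f ^ 2 * k := by positivity
  rcases le_or_gt (f ^ 2 * k) 1 with hsmall | hlarge
  · exact measureReal_le_one.trans (one_le_one_div hfk hsmall)
  have hV0 : 0 ≤ Var[S; P] := variance_nonneg S P
  have hf1 : 0 ≤ 1 - f := nonneg_of_mul_nonneg_left (hV0.trans hvar) hk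
  have ht : 0 < f * k - 1 := by linear_combination hlarge + f * k * hf1
  have hsubset : {ω | k - 1 < S ω} ⊆ {ω | P[S] + (f * k - 1) ≤ S ω} := by
    intro ω (hω : k - 1 < S ω)
    change P[S] + (f * k - 1) ≤ S ω
    linarith
  have hquad : Var[S; P] * (f ^ 2 * k - 1) ≤ (f * k - 1) ^ 2 :=
    (mul_le_mul_of_nonneg_right hvar (sub_nonneg.2 hlarge.le)).trans
      (one_sub_mul_mul_sq_mul_sub_one_le_sq hf.le hk.le)
  calc P.real {ω | k - 1 < S ω}
      ≤ P.real {ω | P[S] + (f * k - 1) ≤ S ω} := measureReal_mono hsubset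
    _ ≤ Var[S; P] / (Var[S; P] + (f * k - 1) ^ 2) :=
        measureReal_integral_add_le_le_variance_div hS ht
    _ ≤ 1 / (f ^ 2 * k) := by
        rw [div_le_div_iff₀ (by positivity) hfk]
        linear_combination hquad

theorem measureReal_sub_one_lt_sum_le_one_div {ι : Type*} {F : Finset ι} {X : ι → Ω → ℝ} {f k : ℝ}
    (hf : 0 < f) (hk : 0 < k) (hX : ∀ u ∈ F, AEMeasurable (X u) P)
    (h01 : ∀ u ∈ F, ∀ᵐ ω ∂P, X u ω ∈ Set.Icc 0 1)
    (hcov : (F : Set ι).Pairwise fun u w => cov[X u, X w; P] ≤ 0)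
    (hmean : ∑ u ∈ F, P[X u] ≤ (1 - f) * k) :
    P.real {ω | k - 1 < ∑ u ∈ F, X u ω} ≤ 1 / (f ^ 2 * k) := by
  have hLp : ∀ u ∈ F, MemLp (X u) 2 P := fun u hu =>
    memLp_of_bounded (h01 u hu) (hX u hu).aestronglyMeasurable 2
  refine measureReal_sub_one_lt_le_one_div (memLp_finsetSum F hLp) hf hk ?_ ?_
  · rwa [integral_finsetSum F fun u hu => (hLp u hu).integrable one_le_two]
  · calc Var[fun ω => ∑ u ∈ F, X u ω; P]
        ≤ ∑ u ∈ F, Var[X u; P] := variance_sum_le_sum_variance hLp hcov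
      _ ≤ ∑ u ∈ F, P[X u] := Finset.sum_le_sum fun u hu =>
          variance_le_integral_of_mem_Icc_zero_one (hX u hu) (h01 u hu)
      _ ≤ (1 - f) * k := hmean

theorem stmt6_general {ι β : Type*} [MeasurableSpace β] {F : Finset ι} {X : ι → Ω → ℝ}
    {Z : Ω → β} {B : Set β} {f k : ℝ} (hf : 0 < f) (hk : 0 < k)
    (hX : ∀ u ∈ F, AEMeasurable (X u) P)
    (h01 : ∀ u ∈ F, ∀ᵐ ω ∂P, X u ω ∈ Set.Icc 0 1)
    (hcov : (F : Set ι).Pairwise fun u w => cov[X u, X w; P] ≤ 0)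
    (hmean : ∑ u ∈ F, P[X u] ≤ (1 - f) * k)
    (hB : MeasurableSet B) (hZ : IndepFun Z (fun ω => ∑ u ∈ F, X u ω) P) :
    P.real (Z ⁻¹' B) * (1 - 1 / (f ^ 2 * k))
      ≤ P.real (Z ⁻¹' B ∩ {ω | ∑ u ∈ F, X u ω ≤ k - 1}) := by
  have hmul : P.real (Z ⁻¹' B ∩ {ω | ∑ u ∈ F, X u ω ≤ k - 1})
      = P.real (Z ⁻¹' B) * P.real {ω | ∑ u ∈ F, X u ω ≤ k - 1} := by
    simp only [measureReal_def, ← ENNReal.toReal_mul]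
    exact congrArg _ (hZ.measure_inter_preimage_eq_mul B (Set.Iic (k - 1)) hB measurableSet_Iic)
  have hnull : NullMeasurableSet {ω | ∑ u ∈ F, X u ω ≤ k - 1} P :=
    nullMeasurableSet_le (Finset.aemeasurable_fun_sum F hX) aemeasurable_const
  have htail := measureReal_sub_one_lt_sum_le_one_div hf hk hX h01 hcov hmean
  have hcompl := probReal_compl_eq_one_sub₀ hnull
  simp only [Set.compl_ofPred, not_le] at hcompl
  rw [hmul]
  exact mul_le_mul_of_nonneg_left (by linarith) measureReal_nonneg

end Probability

/-- With `(Y u)_{u ∈ F}` pairwise independent `{0,1}`-valued, `Y v` independent of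
`∑_{u ∈ F} Y u`, means `E[Y u] = (1 - f) * x u` with `x u ∈ [0,1]`, `0 < f ≤ 1`, and
`∑_{u ∈ F} x u ≤ k`, we have
`Pr[Y v = 1 ∧ ∑_{u ∈ F} Y u ≤ k - 1] ≥ (1 - f) * x v * (1 - 1/(f² k))`. -/
theorem stmt6 {Ω : Type*} [MeasureSpace Ω] [IsProbabilityMeasure (volume : Measure Ω)]
    {ι : Type*} [DecidableEq ι] (F : Finset ι) (v : ι) (hv : v ∉ F)
    (Y : ι → Ω → ℝ) (x : ι → ℝ) (f k : ℝ)
    (hf0 : 0 < f) (hf1 : f ≤ 1) (hk : 0 < k)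
    (hmeas : ∀ u ∈ insert v F, Measurable (Y u))
    (h01 : ∀ u ∈ insert v F, ∀ ω, Y u ω = 0 ∨ Y u ω = 1)
    (hindep : ∀ u ∈ F, ∀ u' ∈ F, u ≠ u' → IndepFun (Y u) (Y u') volume)
    (hvindep : IndepFun (Y v) (fun ω => ∑ u ∈ F, Y u ω) volume)
    (hmean : ∀ u ∈ insert v F, ∫ ω, Y u ω = (1 - f) * x u)
    (hx : ∀ u ∈ insert v F, 0 ≤ x u ∧ x u ≤ 1)
    (hsum : ∑ u ∈ F, x u ≤ k) :
    (1 - f) * x v * (1 - 1 / (f ^ 2 * k))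
      ≤ (volume {ω | Y v ω = 1 ∧ (∑ u ∈ F, Y u ω) ≤ k - 1}).toReal := by
  have hF : ∀ u ∈ F, u ∈ insert v F := fun u => Finset.mem_insert_of_mem
  have hIcc : ∀ u ∈ F, ∀ᵐ ω, Y u ω ∈ Set.Icc 0 1 := fun u hu => ae_of_all _ fun ω => by
    rcases h01 u (hF u hu) ω with h | h <;> simp [h]
  have hLp : ∀ u ∈ F, MemLp (Y u) 2 := fun u hu =>
    memLp_of_bounded (hIcc u hu) (hmeas u (hF u hu)).aestronglyMeasurable 2
  have hmeanF : ∑ u ∈ F, ∫ ω, Y u ω ≤ (1 - f) * k := by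
    rw [Finset.sum_congr rfl fun u hu => hmean u (hF u hu), ← Finset.mul_sum]
    exact mul_le_mul_of_nonneg_left hsum (sub_nonneg.2 hf1)
  have hv' := Finset.mem_insert_self v F
  rw [← hmean v hv',
    integral_eq_measureReal_preimage_one (hmeas v hv').aemeasurable (ae_of_all _ (h01 v hv'))]
  exact stmt6_general hf0 hk (fun u hu => (hmeas u (hF u hu)).aemeasurable) hIcc
    (fun u hu w hw huw => ((hindep u hu w hw huw).covariance_eq_zero (hLp u hu) (hLp w hw)).le)
    hmeanF (measurableSet_singleton 1) hvindep
end
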